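/- Let σ > 0 and let X be a real-valued random variable satisfying P(|X| > ε) < 2·exp(−ε²/(2σ²)) for every ε > 0. Set a = √(2σ²·log 2) and assume E[|X| − a] ≤ 0. Then for every s > 0, E[ exp( s·(|X| − a) ) ] ≤ exp(4·s²·σ²). (Lemma 'subgaussian': MGF bound for the shifted absolute value of a subgaussian random variable.) -/

import Mathlib

open MeasureTheory

lemma aux_exp_neg (u : ℝ) (hu : u ≤ 0) : Real.exp u ≤ 1 + u + u ^ 2 / 2 := by
  have h := Real.quadratic_le_exp_of_nonneg (x := -u) (by linarith)
  have h1 : Real.exp u * Real.exp (-u) = 1 := by rw [← Real.exp_add]; simp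
  have h2 := Real.exp_pos u
  have h3 : 0 < Real.exp (-u) := Real.exp_pos _
  have h4 : 0 < 1 + u + u ^ 2 / 2 := by nlinarith [sq_nonneg (u + 1)]
  have h5 : (1 + u + u ^ 2 / 2) * (1 + -u + (-u) ^ 2 / 2) ≤
      (1 + u + u ^ 2 / 2) * Real.exp (-u) := mul_le_mul_of_nonneg_left h h4.le
  have h6 : (1 + u + u ^ 2 / 2) * (1 + -u + (-u) ^ 2 / 2) = 1 + u ^ 4 / 4 := by ring
  have h7 : 0 ≤ u ^ 4 := by positivity
  have : Real.exp u * Real.exp (-u) ≤ (1 + u + u ^ 2 / 2) * Real.exp (-u) := by linarith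
  exact le_of_mul_le_mul_right this h3

lemma aux_lint (σ C : ℝ) (hσ : 0 < σ) (hC : 0 ≤ C) :
    ∫⁻ t in Set.Ioi (0 : ℝ), ENNReal.ofReal (C * t * Real.exp (-t ^ 2 / (4 * σ ^ 2))) =
      ENNReal.ofReal (C * (2 * σ ^ 2)) := by
  have hd : ∀ t ∈ Set.Ici (0 : ℝ), HasDerivAt
      (fun t => -(C * (2 * σ ^ 2)) * Real.exp (-t ^ 2 / (4 * σ ^ 2)))
      (C * t * Real.exp (-t ^ 2 / (4 * σ ^ 2))) t := by
    intro t _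
    have := ((((hasDerivAt_id t).pow 2).neg.div_const (4 * σ ^ 2)).exp).const_mul
      (-(C * (2 * σ ^ 2)))
    refine this.congr_deriv ?_
    simp
    field_simp
    try ring
  have hp : ∀ t ∈ Set.Ioi (0 : ℝ), 0 ≤ C * t * Real.exp (-t ^ 2 / (4 * σ ^ 2)) := by
    intro t ht
    have : (0 : ℝ) < t := ht
    positivity
  have hl : Filter.Tendsto (fun t => -(C * (2 * σ ^ 2)) * Real.exp (-t ^ 2 / (4 * σ ^ 2)))
      Filter.atTop (nhds 0) := by
    have h1 : Filter.Tendsto (fun t : ℝ => -t ^ 2 / (4 * σ ^ 2)) Filter.atTop Filter.atBot := by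
      apply Filter.Tendsto.atBot_div_const (by positivity)
      exact Filter.tendsto_neg_atTop_atBot.comp (Filter.tendsto_pow_atTop (by norm_num))
    simpa using (Real.tendsto_exp_atBot.comp h1).const_mul (-(C * (2 * σ ^ 2)))
  have hi := integrableOn_Ioi_deriv_of_nonneg' hd hp hl
  have he := integral_Ioi_of_hasDerivAt_of_nonneg' hd hp hl
  rw [← ofReal_integral_eq_lintegral_ofReal hi, he]
  · simp
  · exact (ae_restrict_iff' measurableSet_Ioi).2 (Filter.Eventually.of_forall hp)

theorem subgaussian_shifted_mgf_bound {Ω : Type*} [MeasurableSpace Ω]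
    (μ : Measure Ω) [IsProbabilityMeasure μ]
    (X : Ω → ℝ) (hX : Measurable X)
    (σ : ℝ) (hσ : 0 < σ)
    (a : ℝ) (ha : a = Real.sqrt (2 * σ ^ 2 * Real.log 2))
    (htail : ∀ ε : ℝ, 0 < ε →
      (μ {ω | |X ω| > ε}).toReal < 2 * Real.exp (-ε ^ 2 / (2 * σ ^ 2)))
    (hmean : ∫ ω, |X ω| ∂μ ≤ a)
    (s : ℝ) (hs : 0 < s) :
    ∫⁻ ω, ENNReal.ofReal (Real.exp (s * (|X ω| - a))) ∂μ ≤
      ENNReal.ofReal (Real.exp (4 * s ^ 2 * σ ^ 2)) := by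
  have hlog : 0 < Real.log 2 := Real.log_pos (by norm_num)
  have hlog1 : Real.log 2 ≤ 1 := by linarith [Real.log_two_lt_d9]
  have ha0 : 0 < a := by rw [ha]; positivity
  have ha2 : a ^ 2 = 2 * σ ^ 2 * Real.log 2 := by rw [ha]; exact Real.sq_sqrt (by positivity)
  set Y : Ω → ℝ := fun ω => max (|X ω| - a) 0 with hYdef
  have hYm : Measurable Y := by fun_prop
  have hY0 : ∀ ω, 0 ≤ Y ω := fun ω => le_max_right _ _
  set φ : Ω → ℝ := fun ω => Real.exp (s * Y ω) - 1 - s * Y ω with hφdef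
  have hφm : Measurable φ := by fun_prop
  have hφ0 : ∀ ω, 0 ≤ φ ω := fun ω => by
    have := Real.add_one_le_exp (s * Y ω)
    simp only [hφdef]; linarith
  set C := s ^ 2 * Real.exp (s ^ 2 * σ ^ 2) with hCdef
  have hC : 0 ≤ C := by positivity
  -- tail
  have htail' : ∀ t : ℝ, 0 < t → μ {ω | t < Y ω} ≤
      ENNReal.ofReal (Real.exp (-t ^ 2 / (2 * σ ^ 2))) := by
    intro t ht
    have h1 := htail (a + t) (by linarith)
    have h2 : {ω | t < Y ω} = {ω | |X ω| > a + t} := by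
      ext ω
      simp only [hYdef, Set.mem_setOf_eq, lt_max_iff, gt_iff_lt]
      constructor
      · rintro (h | h) <;> linarith
      · intro h; left; linarith
    rw [h2]
    refine (ENNReal.le_ofReal_iff_toReal_le (measure_ne_top _ _) (by positivity)).2 (h1.le.trans ?_)
    have h3 : (2 : ℝ) = Real.exp (Real.log 2) := (Real.exp_log (by norm_num)).symm
    have h4 : 2 * Real.exp (-(a + t) ^ 2 / (2 * σ ^ 2)) =
        Real.exp (Real.log 2 + -(a + t) ^ 2 / (2 * σ ^ 2)) := by
      rw [Real.exp_add, ← h3]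
    rw [h4]
    apply Real.exp_le_exp.2
    have h5 : Real.log 2 = a ^ 2 / (2 * σ ^ 2) := by rw [ha2]; field_simp
    rw [h5, ← add_div]
    apply div_le_div_of_nonneg_right _ (by positivity)
    nlinarith [mul_pos ha0 ht]
  have hlay : ∫⁻ ω, ENNReal.ofReal (φ ω) ∂μ ≤ ENNReal.ofReal (C * (2 * σ ^ 2)) := by
    have h := lintegral_comp_eq_lintegral_meas_lt_mul μ (f := Y)
      (g := fun t => s * (Real.exp (s * t) - 1)) (Filter.Eventually.of_forall hY0)
      hYm.aemeasurable
      (fun t _ => Continuous.intervalIntegrable (by fun_prop) _ _)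
      ((ae_restrict_iff' measurableSet_Ioi).2 (Filter.Eventually.of_forall (fun t ht => by
        have ht' : (0 : ℝ) < t := ht
        have : 1 ≤ Real.exp (s * t) := Real.one_le_exp (by positivity)
        exact mul_nonneg hs.le (by linarith))))
    have h1 : ∀ ω, ∫ t in (0 : ℝ)..Y ω, s * (Real.exp (s * t) - 1) = φ ω := by
      intro ω
      rw [intervalIntegral.integral_eq_sub_of_hasDerivAt
        (f := fun t => Real.exp (s * t) - s * t)]
      · simp [hφdef]; ring
      · intro t _
        have h0 : HasDerivAt (fun t => s * t) s t := by
          simpa using (hasDerivAt_id t).const_mul s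
        exact (h0.exp.sub h0).congr_deriv (by ring)
      · exact Continuous.intervalIntegrable (by fun_prop) _ _
    simp only [h1] at h
    rw [h, ← aux_lint σ C hσ hC]
    refine setLIntegral_mono' measurableSet_Ioi (fun t ht => ?_)
    have ht' : (0 : ℝ) < t := ht
    refine (mul_le_mul_left (htail' t ht') _).trans ?_
    rw [← ENNReal.ofReal_mul (by positivity)]
    apply ENNReal.ofReal_le_ofReal
    have e1 : Real.exp (s * t) - 1 ≤ s * t * Real.exp (s * t) := by
      have := Real.add_one_le_exp (-(s * t))
      have h2 : Real.exp (-(s * t)) * Real.exp (s * t) = 1 := by rw [← Real.exp_add]; simp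
      nlinarith [Real.exp_pos (s * t)]
    have e2 : Real.exp (-t ^ 2 / (2 * σ ^ 2)) * Real.exp (s * t) ≤
        Real.exp (s ^ 2 * σ ^ 2) * Real.exp (-t ^ 2 / (4 * σ ^ 2)) := by
      rw [← Real.exp_add, ← Real.exp_add]
      apply Real.exp_le_exp.2
      have : s ^ 2 * σ ^ 2 + -t ^ 2 / (4 * σ ^ 2) - (-t ^ 2 / (2 * σ ^ 2) + s * t)
        = (s * σ - t / (2 * σ)) ^ 2 := by field_simp; ring
      nlinarith [sq_nonneg (s * σ - t / (2 * σ))]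
    calc Real.exp (-t ^ 2 / (2 * σ ^ 2)) * (s * (Real.exp (s * t) - 1))
        ≤ Real.exp (-t ^ 2 / (2 * σ ^ 2)) * (s * (s * t * Real.exp (s * t))) := by gcongr
      _ = s ^ 2 * t * (Real.exp (-t ^ 2 / (2 * σ ^ 2)) * Real.exp (s * t)) := by ring
      _ ≤ s ^ 2 * t * (Real.exp (s ^ 2 * σ ^ 2) * Real.exp (-t ^ 2 / (4 * σ ^ 2))) := by gcongr
      _ = _ := by rw [hCdef]; ring
  have hφi : Integrable φ μ :=
    (lintegral_ofReal_ne_top_iff_integrable hφm.aestronglyMeasurable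
      (Filter.Eventually.of_forall hφ0)).1 (hlay.trans_lt ENNReal.ofReal_lt_top).ne
  have hφE : ∫ ω, φ ω ∂μ ≤ C * (2 * σ ^ 2) := by
    rw [← ofReal_integral_eq_lintegral_ofReal hφi (Filter.Eventually.of_forall hφ0)] at hlay
    exact (ENNReal.ofReal_le_ofReal_iff (by positivity)).1 hlay
  have hXi : Integrable (fun ω => |X ω|) μ := by
    refine Integrable.mono' (g := fun ω => a + (1 + φ ω) / s)
      ((integrable_const a).add (((integrable_const 1).add hφi).div_const s))
      hX.abs.aestronglyMeasurable (Filter.Eventually.of_forall (fun ω => ?_))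
    have h1 := Real.quadratic_le_exp_of_nonneg (mul_nonneg hs.le (hY0 ω))
    have h2 : Y ω ≤ (1 + φ ω) / s := by
      rw [le_div_iff₀ hs]
      simp only [hφdef]
      nlinarith [sq_nonneg (s * Y ω - 1)]
    have h3 : |X ω| - a ≤ Y ω := le_max_left _ _
    simp only [Real.norm_eq_abs, abs_abs]
    linarith
  set G : Ω → ℝ := fun ω => (1 - s * a + s ^ 2 * a ^ 2 / 2) + (s * |X ω| + φ ω) with hG
  have hGi : Integrable G μ := (integrable_const _).add ((hXi.const_mul s).add hφi)
  have hle : ∀ ω, Real.exp (s * (|X ω| - a)) ≤ G ω := by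
    intro ω
    rcases le_total (|X ω| - a) 0 with h | h
    · have h1 := aux_exp_neg (s * (|X ω| - a)) (mul_nonpos_of_nonneg_of_nonpos hs.le h)
      have h2 := hφ0 ω
      have h3 : (s * (|X ω| - a)) ^ 2 ≤ s ^ 2 * a ^ 2 := by
        rw [mul_pow]
        gcongr s ^ 2 * ?_
        nlinarith [abs_nonneg (X ω)]
      simp only [hG]; linarith
    · have h1 : Y ω = |X ω| - a := max_eq_left h
      have : 0 ≤ s ^ 2 * a ^ 2 := by positivity
      simp only [hG, hφdef, h1]; linarith
  calc ∫⁻ ω, ENNReal.ofReal (Real.exp (s * (|X ω| - a))) ∂μ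
      ≤ ∫⁻ ω, ENNReal.ofReal (G ω) ∂μ := lintegral_mono fun ω => ENNReal.ofReal_le_ofReal (hle ω)
    _ = ENNReal.ofReal (∫ ω, G ω ∂μ) := (ofReal_integral_eq_lintegral_ofReal hGi
        (Filter.Eventually.of_forall fun ω => (Real.exp_pos _).le.trans (hle ω))).symm
    _ ≤ _ := by
      apply ENNReal.ofReal_le_ofReal
      have hE : ∫ ω, G ω ∂μ = (1 - s * a + s ^ 2 * a ^ 2 / 2) +
          (s * ∫ ω, |X ω| ∂μ + ∫ ω, φ ω ∂μ) := by
        have e1 := integral_add (integrable_const (μ := μ) (1 - s * a + s ^ 2 * a ^ 2 / 2))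
          ((hXi.const_mul s).add hφi)
        have e2 := integral_add (hXi.const_mul s) hφi
        simp only [Pi.add_apply] at e1
        rw [hG, e1, e2, integral_const_mul]
        simp
      rw [hE]
      have m1 := mul_le_mul_of_nonneg_left hmean hs.le
      set q := s ^ 2 * σ ^ 2 with hq
      have hq0 : 0 ≤ q := by positivity
      have m2 : s ^ 2 * a ^ 2 / 2 ≤ q := by
        rw [ha2]
        have : q * Real.log 2 ≤ q * 1 := mul_le_mul_of_nonneg_left hlog1 hq0
        have e : s ^ 2 * (2 * σ ^ 2 * Real.log 2) / 2 = q * Real.log 2 := by rw [hq]; ring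
        linarith
      have m3 : C * (2 * σ ^ 2) = 2 * q * Real.exp q := by rw [hCdef, hq]; ring
      have m4 : Real.exp (4 * s ^ 2 * σ ^ 2) = Real.exp q * Real.exp (3 * q) := by
        rw [← Real.exp_add, hq]; congr 1; ring
      rw [m4]
      have m5 := Real.add_one_le_exp (3 * q)
      have m6 := Real.add_one_le_exp q
      have m7 := mul_le_mul_of_nonneg_left m5 (Real.exp_pos q).le
      nlinarith
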